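/- Let n ≥ 1, let S be a symmetric n×n real matrix with nonnegative entries such that ⟨ψ, Sψ⟩ ≤ 0 for every ψ ∈ ℝ^n with ψ_1+⋯+ψ_n = 0, and let α ∈ (0,1)^n with Σα_i = 1. Then for every θ ≥ 0 the function ψ ↦ θ²⟨ψ, Sψ⟩ + (1/2)Σ_{i=1}^n α_i log ψ_i admits a unique maximizer ψ^θ over the open simplex {ψ ∈ ℝ^n : ψ_i > 0, Σψ_i = 1}, and the map θ ↦ ψ^θ is continuous on [0,∞). In particular there is a continuous selection of maximal arguments of the optimization problem defining F(σ,θ). -/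

import Mathlib

open Finset

/-!
The logarithms make the functional `-∞` on the boundary of the simplex. Its exponential
`exp (θ² ⟨φ, S φ⟩) * ∏ i, φ i ^ (α i / 2)` is instead jointly continuous in `θ` and `φ` on the
compact closed simplex, where it vanishes exactly on the boundary; so it attains its maximum, and
only at interior points. Uniqueness is strict concavity: the quadratic form is concave along the
simplex because differences of its points have coordinate sum zero, and the logarithms are strictly
concave. Finally, a unique maximizer over a compact space has a closed graph as a function of the
parameter, hence is continuous.
-/

section MaximumTheorem

variable {X Y γ : Type*} [TopologicalSpace X] [TopologicalSpace Y] [CompactSpace Y]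

theorem continuous_of_isClosed_graph {m : X → Y} (hm : IsClosed {p : X × Y | p.2 = m p.1}) :
    Continuous m := by
  refine continuous_iff_isClosed.2 fun C hC => ?_
  have hpreimage : m ⁻¹' C = Prod.fst '' ({p : X × Y | p.2 = m p.1} ∩ Prod.snd ⁻¹' C) := by
    ext x
    simp
  rw [hpreimage]
  exact isClosedMap_fst_of_compactSpace _ (hm.inter (hC.preimage continuous_snd))

variable [Nonempty Y] [TopologicalSpace γ] [LinearOrder γ] [OrderClosedTopology γ]

theorem exists_continuous_isMaxOn_of_unique {f : X → Y → γ} (hf : Continuous (Function.uncurry f))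
    (hunique : ∀ x y z, IsMaxOn (f x) Set.univ y → IsMaxOn (f x) Set.univ z → y = z) :
    ∃ m : X → Y, Continuous m ∧ ∀ x, IsMaxOn (f x) Set.univ (m x) := by
  have hexists : ∀ x, ∃ y, IsMaxOn (f x) Set.univ y := fun x =>
    have ⟨y, _, hy⟩ := isCompact_univ.exists_isMaxOn Set.univ_nonempty
      (hf.comp (Continuous.prodMk_right x)).continuousOn
    ⟨y, hy⟩
  choose m hm using hexists
  refine ⟨m, continuous_of_isClosed_graph ?_, hm⟩
  have hgraph : {p : X × Y | p.2 = m p.1} = ⋂ z, {p | f p.1 z ≤ f p.1 p.2} := by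
    ext ⟨x, y⟩
    simp only [Set.mem_iInter, Set.mem_ofPred_eq]
    refine ⟨?_, fun hy => hunique x y (m x) (fun z _ => hy z) (hm x)⟩
    rintro rfl z
    exact hm x (Set.mem_univ z)
  rw [hgraph]
  exact isClosed_iInter fun z =>
    isClosed_le (hf.comp (continuous_fst.prodMk continuous_const)) hf

end MaximumTheorem

section Concavity

theorem concaveOn_bilinForm_apply_self {𝕜 E : Type*} [CommRing 𝕜] [PartialOrder 𝕜]
    [IsOrderedRing 𝕜] [AddCommGroup E] [Module 𝕜 E] {s : Set E} (hs : Convex 𝕜 s)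
    (B : LinearMap.BilinForm 𝕜 E) (hB : ∀ x ∈ s, ∀ y ∈ s, B (x - y) (x - y) ≤ 0) :
    ConcaveOn 𝕜 s fun x => B x x := by
  refine ⟨hs, fun x hx y hy a b ha hb hab => ?_⟩
  have hdefect : B (a • x + b • y) (a • x + b • y)
      = a • B x x + b • B y y - a * b * B (x - y) (x - y) := by
    obtain rfl : b = 1 - a := eq_sub_of_add_eq' hab
    simp only [map_add, map_sub, map_smul, LinearMap.add_apply, LinearMap.sub_apply,
      LinearMap.smul_apply, smul_eq_mul]
    ring
  beta_reduce
  rw [hdefect]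
  exact (le_sub_self_iff _).2
    (mul_nonpos_of_nonneg_of_nonpos (mul_nonneg ha hb) (hB x hx y hy))

theorem concaveOn_hyperplane_quadraticForm {ι : Type*} [Fintype ι] {S : Matrix ι ι ℝ}
    (hS : ∀ ψ : ι → ℝ, ∑ i, ψ i = 0 → ∑ i, ∑ j, ψ i * S i j * ψ j ≤ 0) (c : ℝ) :
    ConcaveOn ℝ {φ : ι → ℝ | ∑ i, φ i = c} fun φ => ∑ i, ∑ j, φ i * S i j * φ j := by
  classical
  have hconvex : Convex ℝ {φ : ι → ℝ | ∑ i, φ i = c} :=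
    convex_hyperplane ⟨fun φ χ => sum_add_distrib, fun a φ => (mul_sum _ φ a).symm⟩ c
  simp only [← Matrix.toBilin'_apply] at hS ⊢
  refine concaveOn_bilinForm_apply_self hconvex _ fun φ hφ χ hχ => hS _ ?_
  simp only [Pi.sub_apply, sum_sub_distrib, hφ.out, hχ.out, sub_self]

theorem strictConcaveOn_smul {𝕜 E β : Type*} [CommSemiring 𝕜] [PartialOrder 𝕜]
    [AddCommMonoid E] [SMul 𝕜 E] [AddCommMonoid β] [PartialOrder β] [Module 𝕜 β]
    [PosSMulStrictMono 𝕜 β] {s : Set E} {f : E → β} {c : 𝕜} (hc : 0 < c)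
    (hf : StrictConcaveOn 𝕜 s f) : StrictConcaveOn 𝕜 s fun x => c • f x :=
  ⟨hf.1, fun x hx y hy hxy a b ha hb hab =>
    calc a • c • f x + b • c • f y = c • (a • f x + b • f y) := by
          rw [smul_add, smul_comm c, smul_comm c]
      _ < c • f (a • x + b • y) := smul_lt_smul_of_pos_left (hf.2 hx hy hxy ha hb hab) hc⟩

theorem strictConcaveOn_sum_apply {𝕜 ι β : Type*} {E : ι → Type*} [Fintype ι]
    [Semiring 𝕜] [PartialOrder 𝕜] [∀ i, AddCommMonoid (E i)] [∀ i, Module 𝕜 (E i)]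
    [AddCommMonoid β] [PartialOrder β] [IsOrderedCancelAddMonoid β] [Module 𝕜 β]
    {s : ∀ i, Set (E i)} {f : ∀ i, E i → β} (hf : ∀ i, StrictConcaveOn 𝕜 (s i) (f i)) :
    StrictConcaveOn 𝕜 (Set.univ.pi s) fun x => ∑ i, f i (x i) := by
  refine ⟨convex_pi fun i _ => (hf i).1, fun x hx y hy hxy a b ha hb hab => ?_⟩
  obtain ⟨k, hk⟩ := Function.ne_iff.1 hxy
  simp only [smul_sum, ← sum_add_distrib]
  refine sum_lt_sum (fun i _ => ?_) ⟨k, mem_univ k, ?_⟩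
  · exact (hf i).concaveOn.2 (hx i trivial) (hy i trivial) ha.le hb.le hab
  · exact (hf k).2 (hx k trivial) (hy k trivial) hk ha hb hab

end Concavity

section Simplex

/-- The open probability simplex: the points of `stdSimplex ℝ ι` all of whose coordinates are
positive. -/
def openSimplex (ι : Type*) [Fintype ι] : Set (ι → ℝ) :=
  {φ | (∀ i, 0 < φ i) ∧ ∑ i, φ i = 1}

variable {ι : Type*} [Fintype ι]

theorem openSimplex_subset_stdSimplex : openSimplex ι ⊆ stdSimplex ℝ ι :=
  fun _ hφ => ⟨fun i => (hφ.1 i).le, hφ.2⟩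

theorem openSimplex_subset_pi_Ioi : openSimplex ι ⊆ Set.univ.pi fun _ => Set.Ioi 0 :=
  fun _ hφ i _ => hφ.1 i

theorem openSimplex_eq_stdSimplex_inter_pi_Ioi :
    openSimplex ι = stdSimplex ℝ ι ∩ Set.univ.pi fun _ => Set.Ioi 0 :=
  Set.Subset.antisymm
    (fun _ hφ => ⟨openSimplex_subset_stdSimplex hφ, openSimplex_subset_pi_Ioi hφ⟩)
    fun _ hφ => ⟨fun i => hφ.2 i trivial, hφ.1.2⟩

theorem convex_openSimplex : Convex ℝ (openSimplex ι) := by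
  rw [openSimplex_eq_stdSimplex_inter_pi_Ioi]
  exact (convex_stdSimplex ℝ ι).inter (convex_pi fun _ _ => convex_Ioi 0)

theorem openSimplex_nonempty [Nonempty ι] : (openSimplex ι).Nonempty :=
  ⟨(stdSimplex.barycenter : stdSimplex ℝ ι),
    fun _ => inv_pos.2 (Nat.cast_pos.2 Fintype.card_pos), stdSimplex.barycenter.2.2⟩

/-- The functional `g` plus the logarithmic barrier with weights `α`. It is meant for points with
positive coordinates only, since `Real.log 0 = 0`. -/
noncomputable def logBarrier (g : (ι → ℝ) → ℝ) (α φ : ι → ℝ) : ℝ :=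
  g φ + ∑ i, α i * Real.log (φ i)

/-- The exponential of `logBarrier g α`, written so that it extends continuously, by zero, to the
boundary of the simplex when the weights are positive. -/
noncomputable def expLogBarrier (g : (ι → ℝ) → ℝ) (α φ : ι → ℝ) : ℝ :=
  Real.exp (g φ) * ∏ i, φ i ^ α i

variable {g : (ι → ℝ) → ℝ} {α : ι → ℝ}

theorem strictConcaveOn_logBarrier (hg : ConcaveOn ℝ (openSimplex ι) g) (hα : ∀ i, 0 < α i) :
    StrictConcaveOn ℝ (openSimplex ι) (logBarrier g α) := by
  have hlog : StrictConcaveOn ℝ (Set.univ.pi fun _ => Set.Ioi 0)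
      fun φ : ι → ℝ => ∑ i, α i * Real.log (φ i) :=
    strictConcaveOn_sum_apply fun i => strictConcaveOn_smul (hα i) strictConcaveOn_log_Ioi
  exact hg.add_strictConcaveOn (hlog.subset openSimplex_subset_pi_Ioi convex_openSimplex)

theorem expLogBarrier_eq_exp {φ : ι → ℝ} (hφ : ∀ i, 0 < φ i) :
    expLogBarrier g α φ = Real.exp (logBarrier g α φ) := by
  simp only [expLogBarrier, logBarrier, Real.exp_add, Real.exp_sum,
    Real.rpow_def_of_pos (hφ _), mul_comm]

theorem mem_openSimplex_of_expLogBarrier_pos (hα : ∀ i, 0 < α i) {φ : ι → ℝ}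
    (hφ : φ ∈ stdSimplex ℝ ι) (hpos : 0 < expLogBarrier g α φ) : φ ∈ openSimplex ι := by
  refine ⟨fun i => (hφ.1 i).lt_of_ne' fun hi => hpos.ne' ?_, hφ.2⟩
  rw [expLogBarrier, prod_eq_zero (mem_univ i) (by rw [hi, Real.zero_rpow (hα i).ne']), mul_zero]

theorem mem_openSimplex_of_isMaxOn_expLogBarrier [Nonempty ι] (hα : ∀ i, 0 < α i) {φ : ι → ℝ}
    (hφ : φ ∈ stdSimplex ℝ ι) (hmax : IsMaxOn (expLogBarrier g α) (stdSimplex ℝ ι) φ) :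
    φ ∈ openSimplex ι := by
  obtain ⟨χ, hχ⟩ := openSimplex_nonempty (ι := ι)
  refine mem_openSimplex_of_expLogBarrier_pos hα hφ (lt_of_lt_of_le ?_
    (hmax (openSimplex_subset_stdSimplex hχ)))
  rw [expLogBarrier_eq_exp hχ.1]
  exact Real.exp_pos _

theorem isMaxOn_logBarrier_of_isMaxOn_expLogBarrier {φ : ι → ℝ} (hφ : φ ∈ openSimplex ι)
    (hmax : IsMaxOn (expLogBarrier g α) (stdSimplex ℝ ι) φ) :
    IsMaxOn (logBarrier g α) (openSimplex ι) φ := by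
  intro χ hχ
  have hle : expLogBarrier g α χ ≤ expLogBarrier g α φ :=
    hmax (openSimplex_subset_stdSimplex hχ)
  rwa [expLogBarrier_eq_exp hχ.1, expLogBarrier_eq_exp hφ.1, Real.exp_le_exp] at hle

variable {X : Type*} [TopologicalSpace X] {f : X → (ι → ℝ) → ℝ}

theorem continuousOn_uncurry_expLogBarrier {s : Set (X × (ι → ℝ))}
    (hf : ContinuousOn (Function.uncurry f) s) (hα : ∀ i, 0 ≤ α i) :
    ContinuousOn (Function.uncurry fun x => expLogBarrier (f x) α) s := by
  have hprod : Continuous fun p : X × (ι → ℝ) => ∏ i, p.2 i ^ α i :=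
    continuous_finsetProd _ fun i _ =>
      ((continuous_apply i).comp continuous_snd).rpow_const fun _ => Or.inr (hα i)
  exact (Real.continuous_exp.comp_continuousOn hf).mul hprod.continuousOn

theorem exists_continuous_isMaxOn_logBarrier [Nonempty ι]
    (hf : ContinuousOn (Function.uncurry f) (Set.univ ×ˢ stdSimplex ℝ ι))
    (hconcave : ∀ x, ConcaveOn ℝ (openSimplex ι) (f x)) (hα : ∀ i, 0 < α i) :
    ∃ ψ : X → ι → ℝ, Continuous ψ ∧
      ∀ x φ, φ ∈ openSimplex ι ∧ IsMaxOn (logBarrier (f x) α) (openSimplex ι) φ ↔ φ = ψ x := by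
  have hunique : ∀ x φ χ, φ ∈ openSimplex ι ∧ IsMaxOn (logBarrier (f x) α) (openSimplex ι) φ →
      χ ∈ openSimplex ι ∧ IsMaxOn (logBarrier (f x) α) (openSimplex ι) χ → φ = χ :=
    fun x φ χ ⟨hφ, hφmax⟩ ⟨hχ, hχmax⟩ =>
      (strictConcaveOn_logBarrier (hconcave x) hα).eq_of_isMaxOn hφmax hχmax hφ hχ
  have hmem : ∀ x (y : stdSimplex ℝ ι),
      IsMaxOn (fun z : stdSimplex ℝ ι => expLogBarrier (f x) α z) Set.univ y →
      (y : ι → ℝ) ∈ openSimplex ι ∧ IsMaxOn (logBarrier (f x) α) (openSimplex ι) y := by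
    intro x y hy
    have hmax : IsMaxOn (expLogBarrier (f x) α) (stdSimplex ℝ ι) y := fun z hz =>
      hy (Set.mem_univ (⟨z, hz⟩ : stdSimplex ℝ ι))
    have hopen := mem_openSimplex_of_isMaxOn_expLogBarrier hα y.2 hmax
    exact ⟨hopen, isMaxOn_logBarrier_of_isMaxOn_expLogBarrier hopen hmax⟩
  have hcont : Continuous (Function.uncurry fun x (y : stdSimplex ℝ ι) =>
      expLogBarrier (f x) α y) :=
    (continuousOn_uncurry_expLogBarrier hf fun i => (hα i).le).comp_continuous
      (continuous_fst.prodMk (continuous_subtype_val.comp continuous_snd))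
      fun p => ⟨Set.mem_univ _, p.2.2⟩
  obtain ⟨ψ, hψ, hmax⟩ := exists_continuous_isMaxOn_of_unique hcont fun x y z hy hz =>
    Subtype.ext (hunique x y z (hmem x y hy) (hmem x z hz))
  refine ⟨fun x => ψ x, continuous_subtype_val.comp hψ, fun x φ =>
    ⟨fun hφ => hunique x φ (ψ x) hφ (hmem x (ψ x) (hmax x)), ?_⟩⟩
  rintro rfl
  exact hmem x (ψ x) (hmax x)

end Simplex

theorem unique_continuous_maximizer_of_concave_profile_general {ι : Type*} [Fintype ι] [Nonempty ι]
    (S : Matrix ι ι ℝ)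
    (hS : ∀ ψ : ι → ℝ, ∑ i, ψ i = 0 → ∑ i, ∑ j, ψ i * S i j * ψ j ≤ 0)
    (α : ι → ℝ) (hα : ∀ i, 0 < α i) :
    ∃ ψ : ℝ → ι → ℝ, Continuous ψ ∧
      ∀ θ : ℝ,
        (∀ i, 0 < ψ θ i) ∧ (∑ i, ψ θ i = 1) ∧
        (∀ φ : ι → ℝ, (∀ i, 0 < φ i) → ∑ i, φ i = 1 →
          θ ^ 2 * ∑ i, ∑ j, φ i * S i j * φ j + (1 / 2) * ∑ i, α i * Real.log (φ i)
            ≤ θ ^ 2 * ∑ i, ∑ j, ψ θ i * S i j * ψ θ j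
              + (1 / 2) * ∑ i, α i * Real.log (ψ θ i)) ∧
        (∀ φ : ι → ℝ, (∀ i, 0 < φ i) → ∑ i, φ i = 1 →
          θ ^ 2 * ∑ i, ∑ j, φ i * S i j * φ j + (1 / 2) * ∑ i, α i * Real.log (φ i)
            = θ ^ 2 * ∑ i, ∑ j, ψ θ i * S i j * ψ θ j
              + (1 / 2) * ∑ i, α i * Real.log (ψ θ i) →
          φ = ψ θ) := by
  let Q (φ : ι → ℝ) : ℝ := ∑ i, ∑ j, φ i * S i j * φ j
  have hconcave (θ : ℝ) : ConcaveOn ℝ (openSimplex ι) fun φ => θ ^ 2 * Q φ :=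
    ((concaveOn_hyperplane_quadraticForm hS 1).subset (fun _ hφ => hφ.2) convex_openSimplex).smul
      (sq_nonneg θ)
  obtain ⟨ψ, hψ, hmax⟩ := exists_continuous_isMaxOn_logBarrier
    (f := fun (θ : ℝ) φ => θ ^ 2 * Q φ) (Continuous.continuousOn (by fun_prop)) hconcave
    fun i => mul_pos one_half_pos (hα i)
  have hvalue (θ : ℝ) (φ : ι → ℝ) :
      θ ^ 2 * ∑ i, ∑ j, φ i * S i j * φ j + (1 / 2) * ∑ i, α i * Real.log (φ i)
        = logBarrier (fun φ => θ ^ 2 * Q φ) (fun i => 1 / 2 * α i) φ := by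
    simp only [logBarrier, Q, mul_sum, mul_assoc]
  simp only [hvalue]
  refine ⟨ψ, hψ, fun θ => ?_⟩
  obtain ⟨⟨hψpos, hψsum⟩, hψmax⟩ := (hmax θ (ψ θ)).2 rfl
  exact ⟨hψpos, hψsum, fun φ hpos hsum => hψmax ⟨hpos, hsum⟩, fun φ hpos hsum heq =>
    (hmax θ φ).1 ⟨⟨hpos, hsum⟩, fun χ hχ => (hψmax hχ).trans heq.ge⟩⟩

/-- If `S` is a symmetric nonnegative `n × n` matrix whose quadratic form
is nonpositive on the hyperplane `{ψ : Σψᵢ = 0}`, and `α ∈ (0,1)ⁿ` sums to `1`, then for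
every `θ ≥ 0` the function `ψ ↦ θ²⟨ψ, Sψ⟩ + (1/2) Σ αᵢ log ψᵢ` has a unique maximizer over
the open simplex, and this maximizer depends continuously on `θ` on `[0,∞)`. -/
theorem unique_continuous_maximizer_of_concave_profile
    (n : ℕ) (hn : 1 ≤ n) (S : Matrix (Fin n) (Fin n) ℝ)
    (hSsymm : S.IsSymm) (hSnn : ∀ i j, 0 ≤ S i j)
    (hSneg : ∀ ψ : Fin n → ℝ, ∑ i, ψ i = 0 → ∑ i, ∑ j, ψ i * S i j * ψ j ≤ 0)
    (α : Fin n → ℝ) (hαpos : ∀ i, 0 < α i) (hαlt : ∀ i, α i < 1)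
    (hαsum : ∑ i, α i = 1) :
    ∃ ψ : ℝ → Fin n → ℝ,
      ContinuousOn ψ (Set.Ici (0:ℝ)) ∧
      ∀ θ : ℝ, 0 ≤ θ →
        (∀ i, 0 < ψ θ i) ∧ (∑ i, ψ θ i = 1) ∧
        (∀ φ : Fin n → ℝ, (∀ i, 0 < φ i) → ∑ i, φ i = 1 →
          θ ^ 2 * ∑ i, ∑ j, φ i * S i j * φ j
              + (1 / 2) * ∑ i, α i * Real.log (φ i)
            ≤ θ ^ 2 * ∑ i, ∑ j, ψ θ i * S i j * ψ θ j
              + (1 / 2) * ∑ i, α i * Real.log (ψ θ i)) ∧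
        (∀ φ : Fin n → ℝ, (∀ i, 0 < φ i) → ∑ i, φ i = 1 →
          θ ^ 2 * ∑ i, ∑ j, φ i * S i j * φ j
              + (1 / 2) * ∑ i, α i * Real.log (φ i)
            = θ ^ 2 * ∑ i, ∑ j, ψ θ i * S i j * ψ θ j
              + (1 / 2) * ∑ i, α i * Real.log (ψ θ i) →
          φ = ψ θ) := by
  have : Nonempty (Fin n) := Fin.pos_iff_nonempty.1 hn
  obtain ⟨ψ, hψ, hmax⟩ := unique_continuous_maximizer_of_concave_profile_general S hSneg α hαpos
  exact ⟨ψ, hψ.continuousOn, fun θ _ => hmax θ⟩
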